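/- Let T : [0,L] → ℝ³ be continuous with ‖T(s)‖ = 1 for all s, let V₀ = {g ∈ L²(0,L;ℝ³) : ∫₀ᴸ g = 0}, D_I = {g ∈ V₀ : g·T = 0 a.e.}, D_E = V₀ ∩ D_I^⊥, and let E > 0. Then for every continuous linear functional ℓ on L²(0,L;ℝ³) there exists a unique g ∈ D_E such that E ∫₀ᴸ (g·T)(h·T) = ℓ(h) for every h ∈ D_E. -/

import Mathlib

open MeasureTheory Set Filter Metric intervalIntegral
open scoped Topology ENNReal RealInnerProductSpace

noncomputable section

/-! Let `J g = ∫ g` and `A g = g·T`, so that `V₀ = ker J`, `D_I = V₀ ∩ ker A` and the form is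
`⟪A g, A h⟫`. On `D_E`, the orthogonal complement of `ker A ∩ V₀` in `V₀`, the operator `A` is
injective and has the same image as on `V₀`. That image is closed: `A` is onto, so it suffices that
`ker A + ker J` is closed, and this is the preimage under `J` of a subspace of a finite-dimensional
space. Hence `A` is an isomorphism of `D_E` onto a Hilbert space, and the Riesz representation of
the functional transported to that space gives the solution. -/

section Hilbert

variable {𝕜 H G : Type*} [RCLike 𝕜] [NormedAddCommGroup H] [InnerProductSpace 𝕜 H]

theorem existsUnique_inner_map_eq_of_isClosed_range [CompleteSpace H] [NormedAddCommGroup G]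
    [InnerProductSpace 𝕜 G] [CompleteSpace G] {A : H →L[𝕜] G} (hinj : Function.Injective A)
    (hclosed : IsClosed (range A)) (ℓ : H →L[𝕜] 𝕜) :
    ∃! g, ∀ h, inner 𝕜 (A g) (A h) = ℓ h := by
  have : CompleteSpace A.range := hclosed.completeSpace_coe
  let e : H ≃L[𝕜] A.range := A.equivRange hinj hclosed
  let y : A.range := (InnerProductSpace.toDual 𝕜 A.range).symm (ℓ ∘L e.symm)
  have hy (h : H) : inner 𝕜 (y : G) (A h) = ℓ h := by
    calc inner 𝕜 (y : G) (A h) = inner 𝕜 y (e h) := rfl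
      _ = ℓ (e.symm (e h)) := InnerProductSpace.toDual_symm_apply
      _ = ℓ h := by rw [e.symm_apply_apply]
  refine ⟨e.symm y, fun h => ?_, fun g hg => ?_⟩
  · rw [← hy h]
    exact congrArg (fun z : A.range => inner 𝕜 (z : G) (A h)) (e.apply_symm_apply y)
  · rw [e.eq_symm_apply]
    refine ext_inner_right 𝕜 fun z => ?_
    obtain ⟨h, rfl⟩ := e.surjective z
    exact (hg h).trans (hy h).symm

/-- The orthogonal complement, inside the subspace `K`, of the kernel of the restriction of `A` to
`K`. This is `D_E` when `K = V₀` and `A` is the scalar product with `T`. -/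
def kerComplement [AddCommGroup G] [Module 𝕜 G] (K : Submodule 𝕜 H) (A : H →ₗ[𝕜] G) :
    Submodule 𝕜 H :=
  K ⊓ (K ⊓ A.ker)ᗮ

namespace kerComplement

section Algebraic

variable [AddCommGroup G] [Module 𝕜 G] (K : Submodule 𝕜 H) (A : H →ₗ[𝕜] G)

lemma disjoint_ker : Disjoint (kerComplement K A) A.ker := by
  rw [disjoint_iff, kerComplement, inf_right_comm, Submodule.inf_orthogonal_eq_bot]

lemma map_eq [(K ⊓ A.ker).HasOrthogonalProjection] : (kerComplement K A).map A = K.map A := by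
  have hsup : (K ⊓ A.ker) ⊔ kerComplement K A = K := by
    rw [kerComplement, inf_comm K (K ⊓ A.ker)ᗮ]
    exact Submodule.sup_orthogonal_inf_of_hasOrthogonalProjection inf_le_left
  have hker : (K ⊓ A.ker).map A = ⊥ := LinearMap.le_ker_iff_map.1 inf_le_right
  rw [← congrArg (Submodule.map A) hsup, Submodule.map_sup, hker, bot_sup_eq]

end Algebraic

variable [CompleteSpace H] [NormedAddCommGroup G] [InnerProductSpace 𝕜 G] [CompleteSpace G]

theorem existsUnique_inner_map_eq {K : Submodule 𝕜 H} {A : H →L[𝕜] G}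
    (hK : IsClosed (K : Set H)) (hAK : IsClosed (K.map A.toLinearMap : Set G)) (ℓ : H →L[𝕜] 𝕜) :
    ∃! g, g ∈ kerComplement K A.toLinearMap ∧
      ∀ h ∈ kerComplement K A.toLinearMap, inner 𝕜 (A g) (A h) = ℓ h := by
  set D := kerComplement K A.toLinearMap
  have hker : IsClosed ((K ⊓ A.ker : Submodule 𝕜 H) : Set H) := hK.inter A.isClosed_ker
  have : CompleteSpace ↥(K ⊓ A.ker) := hker.completeSpace_coe
  have : CompleteSpace D := (hK.inter (Submodule.isClosed_orthogonal _)).completeSpace_coe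
  have hinj : Function.Injective (A ∘L D.subtypeL) :=
    LinearMap.injective_domRestrict_iff.2 (disjoint_ker K A.toLinearMap)
  have hrange : range (A ∘L D.subtypeL) = K.map A.toLinearMap := by
    rw [← map_eq, ContinuousLinearMap.coe_comp, range_comp]
    exact congrArg (A '' ·) Subtype.range_coe
  obtain ⟨g, hg, huniq⟩ :=
    existsUnique_inner_map_eq_of_isClosed_range hinj (hrange ▸ hAK) (ℓ ∘L D.subtypeL)
  refine ⟨g, ⟨g.2, fun h hh => hg ⟨h, hh⟩⟩, fun g' hg' => ?_⟩
  exact congrArg Subtype.val (huniq ⟨g', hg'.1⟩ fun h => hg'.2 h h.2)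

end kerComplement

end Hilbert

lemma isClosed_map_ker_of_surjective {𝕜 X Y F : Type*} [NontriviallyNormedField 𝕜]
    [CompleteSpace 𝕜] [NormedAddCommGroup X] [NormedSpace 𝕜 X] [CompleteSpace X]
    [NormedAddCommGroup Y] [NormedSpace 𝕜 Y] [CompleteSpace Y] [NormedAddCommGroup F]
    [NormedSpace 𝕜 F] [FiniteDimensional 𝕜 F] {A : X →L[𝕜] Y} (hA : Function.Surjective A)
    (J : X →L[𝕜] F) : IsClosed (J.ker.map A.toLinearMap : Set Y) := by
  rw [← (A.isQuotientMap hA).isClosed_preimage]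
  have hpreimage : A ⁻¹' (J.ker.map A.toLinearMap) = J ⁻¹' (A.ker.map J.toLinearMap) :=
    congrArg SetLike.coe <| calc
      (J.ker.map A.toLinearMap).comap A.toLinearMap = J.ker ⊔ A.ker := Submodule.comap_map_eq ..
      _ = A.ker ⊔ J.ker := sup_comm ..
      _ = (A.ker.map J.toLinearMap).comap J.toLinearMap := (Submodule.comap_map_eq ..).symm
  rw [hpreimage]
  exact (Submodule.closed_of_finiteDimensional _).preimage J.continuous

lemma memLp_top_inv_norm_sq_smul {α V : Type*} [MeasurableSpace α] {μ : Measure α}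
    [NormedAddCommGroup V] [NormedSpace ℝ V] {T : α → V} (hT : AEStronglyMeasurable T μ)
    {c : ℝ} (hc : 0 < c) (hTc : ∀ᵐ s ∂μ, c ≤ ‖T s‖) :
    MemLp (fun s => (‖T s‖ ^ 2)⁻¹ • T s) ∞ μ := by
  refine memLp_top_of_bound ((hT.norm.pow 2).inv₀.smul hT) c⁻¹ ?_
  filter_upwards [hTc] with s hs
  calc ‖(‖T s‖ ^ 2)⁻¹ • T s‖ = ‖T s‖⁻¹ := by
        have : ‖T s‖ ≠ 0 := (hc.trans_le hs).ne'
        rw [norm_smul, norm_inv, norm_pow, norm_norm]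
        field_simp
    _ ≤ c⁻¹ := inv_anti₀ hc hs

section Fields

variable {α V : Type*} [MeasurableSpace α] {μ : Measure α}
  [NormedAddCommGroup V] [InnerProductSpace ℝ V]

/-- The operator `g ↦ g·T` on `Lᵖ` fields, for an essentially bounded field `T`. -/
def tangentialComponent (p : ℝ≥0∞) [Fact (1 ≤ p)] {T : α → V} (hT : MemLp T ∞ μ) :
    Lp V p μ →L[ℝ] Lp ℝ p μ :=
  (innerSL ℝ).holderL μ ∞ p p hT.toLp

section TangentialComponent

variable {p : ℝ≥0∞} [Fact (1 ≤ p)] {T : α → V} (hT : MemLp T ∞ μ)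

lemma coeFn_tangentialComponent (g : Lp V p μ) :
    tangentialComponent p hT g =ᵐ[μ] fun s => ⟪g s, T s⟫ := by
  filter_upwards [(innerSL ℝ).coeFn_holder (r := p) hT.toLp g, hT.coeFn_toLp] with s hg hTs
  exact hg.trans (by rw [hTs, innerSL_apply_apply, real_inner_comm])

lemma mem_ker_tangentialComponent {g : Lp V p μ} :
    g ∈ (tangentialComponent p hT).ker ↔ ∀ᵐ s ∂μ, ⟪g s, T s⟫ = 0 :=
  Lp.eq_zero_iff_ae_eq_zero.trans <|
    eventually_congr <| (coeFn_tangentialComponent hT g).mono fun _ hs => Eq.congr_left hs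

lemma tangentialComponent_surjective {U : α → V} (hU : MemLp U ∞ μ)
    (hUT : ∀ᵐ s ∂μ, ⟪U s, T s⟫ = 1) : Function.Surjective (tangentialComponent p hT) := by
  intro f
  let g : Lp V p μ := f • hU.toLp
  refine ⟨g, Lp.ext ?_⟩
  filter_upwards [coeFn_tangentialComponent hT g, Lp.coeFn_lpSMul (r := p) f hU.toLp,
    hU.coeFn_toLp, hUT] with s hgT hg hUs hUTs
  rw [hgT, hg, Pi.smul_apply', hUs, real_inner_smul_left, hUTs, mul_one]

lemma inner_tangentialComponent (g h : Lp V 2 μ) :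
    ⟪tangentialComponent 2 hT g, tangentialComponent 2 hT h⟫ =
      ∫ s, ⟪g s, T s⟫ * ⟪h s, T s⟫ ∂μ := by
  rw [L2.inner_def]
  refine MeasureTheory.integral_congr_ae ?_
  filter_upwards [coeFn_tangentialComponent hT g, coeFn_tangentialComponent hT h] with s hg hh
  rw [hg, hh, Real.inner_apply]

end TangentialComponent

lemma tangentialComponent_surjective_of_le_norm {p : ℝ≥0∞} [Fact (1 ≤ p)] {T : α → V}
    (hT : MemLp T ∞ μ) {c : ℝ} (hc : 0 < c) (hTc : ∀ᵐ s ∂μ, c ≤ ‖T s‖) :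
    Function.Surjective (tangentialComponent p hT) := by
  refine tangentialComponent_surjective hT (memLp_top_inv_norm_sq_smul hT.1 hc hTc) ?_
  filter_upwards [hTc] with s hs
  have hTs : ‖T s‖ ≠ 0 := (hc.trans_le hs).ne'
  rw [real_inner_smul_left, real_inner_self_eq_norm_sq, inv_mul_cancel₀ (pow_ne_zero 2 hTs)]

/-- The Bochner integral as a bounded operator on `L²`: the pairing with the constant function
`1`. -/
def integralL2 [CompleteSpace V] [IsFiniteMeasure μ] : Lp V 2 μ →L[ℝ] V :=
  (ContinuousLinearMap.lsmul ℝ ℝ).lpPairing μ 2 2 (Lp.const 2 μ 1)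

lemma integralL2_apply [CompleteSpace V] [IsFiniteMeasure μ] (g : Lp V 2 μ) :
    integralL2 g = ∫ s, g s ∂μ := by
  rw [integralL2, ContinuousLinearMap.lpPairing_eq_integral]
  refine MeasureTheory.integral_congr_ae ?_
  filter_upwards [Lp.coeFn_const (p := 2) (μ := μ) (1 : ℝ)] with s hs
  rw [hs, Function.const_apply, ContinuousLinearMap.lsmul_apply, one_smul]

lemma mem_kerComplement_integralL2 [CompleteSpace V] [IsFiniteMeasure μ] {T : α → V}
    (hT : MemLp T ∞ μ) {g : Lp V 2 μ} :
    g ∈ kerComplement integralL2.ker (tangentialComponent 2 hT).toLinearMap ↔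
      ∫ s, g s ∂μ = 0 ∧
        ∀ h : Lp V 2 μ, ∫ s, h s ∂μ = 0 → (∀ᵐ s ∂μ, ⟪h s, T s⟫ = 0) → ⟪g, h⟫ = 0 := by
  have hmean (h : Lp V 2 μ) : h ∈ integralL2.ker ↔ ∫ s, h s ∂μ = 0 := by
    rw [← integralL2_apply]
    exact LinearMap.mem_ker
  simp only [kerComplement, Submodule.mem_inf, Submodule.mem_orthogonal', hmean,
    mem_ker_tangentialComponent, and_imp]

end Fields

theorem extensional_problem_wellposed_general {α V : Type*} [MeasurableSpace α] {μ : Measure α}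
    [IsFiniteMeasure μ] [NormedAddCommGroup V] [InnerProductSpace ℝ V] [FiniteDimensional ℝ V]
    {T : α → V} (hT : MemLp T ∞ μ) {c : ℝ} (hc : 0 < c) (hTc : ∀ᵐ s ∂μ, c ≤ ‖T s‖)
    {E : ℝ} (hE : E ≠ 0) (ℓ : Lp V 2 μ →L[ℝ] ℝ) :
    ∃! g : Lp V 2 μ,
      (∫ s, g s ∂μ = 0 ∧
        ∀ h : Lp V 2 μ, ∫ s, h s ∂μ = 0 → (∀ᵐ s ∂μ, ⟪h s, T s⟫ = 0) → ⟪g, h⟫ = 0) ∧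
      ∀ h : Lp V 2 μ,
        (∫ s, h s ∂μ = 0 ∧
          ∀ h' : Lp V 2 μ, ∫ s, h' s ∂μ = 0 → (∀ᵐ s ∂μ, ⟪h' s, T s⟫ = 0) → ⟪h, h'⟫ = 0) →
        E * ∫ s, ⟪g s, T s⟫ * ⟪h s, T s⟫ ∂μ = ℓ h := by
  have : CompleteSpace V := FiniteDimensional.complete ℝ V
  have hclosed := isClosed_map_ker_of_surjective
    (tangentialComponent_surjective_of_le_norm hT hc hTc) (integralL2 (V := V) (μ := μ))
  have hsol := kerComplement.existsUnique_inner_map_eq integralL2.isClosed_ker hclosed (E⁻¹ • ℓ)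
  simpa only [mem_kerComplement_integralL2, inner_tangentialComponent, smul_apply,
    smul_eq_mul, eq_inv_mul_iff_mul_eq₀ hE] using hsol

/-- With `V₀`, `D_I`, `D_E` as in the paper (mean-zero `L²` fields, those
orthogonal a.e. to the unit field `T`, and the orthogonal complement of `D_I` inside `V₀`)
and `E > 0` the Young modulus, for every continuous linear functional `ℓ` on `L²(0,L;ℝ³)`
there is a unique `g ∈ D_E` with `E ∫₀ᴸ (g·T)(h·T) = ℓ(h)` for all `h ∈ D_E`
(well-posedness of the limit extensional problem (31) of Theorem 6.2). -/
theorem extensional_problem_wellposed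
    (L : ℝ) (hL : 0 < L)
    (T : ℝ → EuclideanSpace ℝ (Fin 3))
    (hTcont : ContinuousOn T (Icc 0 L))
    (hT1 : ∀ s ∈ Icc 0 L, ‖T s‖ = 1)
    (E : ℝ) (hE : 0 < E)
    (ℓ : Lp (EuclideanSpace ℝ (Fin 3)) 2 (volume.restrict (Ioo 0 L)) →L[ℝ] ℝ) :
    ∃! g : Lp (EuclideanSpace ℝ (Fin 3)) 2 (volume.restrict (Ioo 0 L)),
      ((∫ s, g s ∂(volume.restrict (Ioo 0 L))) = 0 ∧
        ∀ h : Lp (EuclideanSpace ℝ (Fin 3)) 2 (volume.restrict (Ioo 0 L)),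
          (∫ s, h s ∂(volume.restrict (Ioo 0 L))) = 0 →
          (∀ᵐ s ∂(volume.restrict (Ioo 0 L)), ⟪h s, T s⟫ = 0) →
          ⟪g, h⟫ = 0) ∧
      ∀ h : Lp (EuclideanSpace ℝ (Fin 3)) 2 (volume.restrict (Ioo 0 L)),
        ((∫ s, h s ∂(volume.restrict (Ioo 0 L))) = 0 ∧
          ∀ h' : Lp (EuclideanSpace ℝ (Fin 3)) 2 (volume.restrict (Ioo 0 L)),
            (∫ s, h' s ∂(volume.restrict (Ioo 0 L))) = 0 →
            (∀ᵐ s ∂(volume.restrict (Ioo 0 L)), ⟪h' s, T s⟫ = 0) →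
            ⟪h, h'⟫ = 0) →
        E * ∫ s, ⟪g s, T s⟫ * ⟪h s, T s⟫ ∂(volume.restrict (Ioo 0 L)) = ℓ h := by
  have hTm : AEStronglyMeasurable T (volume.restrict (Ioo 0 L)) :=
    (hTcont.mono Ioo_subset_Icc_self).aestronglyMeasurable measurableSet_Ioo
  have hTn : ∀ᵐ s ∂(volume.restrict (Ioo 0 L)), ‖T s‖ = 1 :=
    ae_restrict_of_forall_mem measurableSet_Ioo fun s hs => hT1 s (Ioo_subset_Icc_self hs)
  exact extensional_problem_wellposed_general
    (memLp_top_of_bound hTm 1 (hTn.mono fun _ hs => hs.le)) one_pos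
    (hTn.mono fun _ hs => hs.ge) hE.ne' ℓ
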